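/- Let σ be a cyclic permutation of {1,…,n} (an n-cycle) and let k > 1 be an integer. Then the permutation A(σ,k) of {1,…,n+k} is cyclic (an (n+k)-cycle), and its RSK shape satisfies Γ(P(A(σ,k))) = Γ(P(σ)) + (1^k), i.e., it is the RSK shape of σ with one extra cell added to each of the first k rows. -/

import Mathlib

/-!
Cyclicity: write `c = ⌈k/2⌉`. On the new positions, the permutation `A(σ,k)` runs along the zigzag
`n+c → … → n+2 → n+k-1 → n+1 → n+k → n`, which visits every new point, while each step
`x → σ x` of `σ` is kept, except that the step into `n` is replaced by a detour through the zigzag.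
So `A(σ,k)` has a single orbit as soon as `σ` has one (`aPerm_sameCycle`).

Shape: replacing `n` by `M = n + c` does not change relative order, hence not the shape
(`rskShape_map`). The tableau obtained from the modified `σ` has entries `< n` and a single `M`,
which ends its row (`oneMax_tableau`). It remains to insert the strictly decreasing word
`d = I^n(L(k)) ⊕ (n)` of length `k`, all of whose letters are `≥ n`, whose first letter exceeds `M`
and which avoids `M`. Process the tableau row by row: a row of entries smaller than `d` gains one
cell and bumps `d` without its last letter into the next row. The row containing `M` also gains
exactly one cell, since the first letter of `d` is larger than `M`; it bumps a strictly decreasing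
word of length one less, in which a letter may have been replaced by `M`. Hence each of the
first `k` rows gains exactly one cell (`shape_small`, `shape_oneMax`).
-/


/-- RSK row insertion of `x` into a tableau (given as its list of rows). -/
def rsInsert : List (List ℕ) → ℕ → List (List ℕ)
  | [], x => [[x]]
  | r :: rest, x =>
    match r.findIdx? (fun b => decide (x < b)) with
    | none => (r ++ [x]) :: rest
    | some i => (r.set i x) :: rsInsert rest (r.getD i 0)

/-- The RSK insertion tableau `P(σ)`. -/
def rsTableau (σ : List ℕ) : List (List ℕ) := σ.foldl rsInsert []

/-- The RSK shape `Γ(P(σ))`, as the list of row lengths of `P(σ)`. -/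
def rskShape (σ : List ℕ) : List ℕ := (rsTableau σ).map List.length

/-- Entrywise sum of two shapes, missing entries treated as `0`. -/
def shapeAdd (a b : List ℕ) : List ℕ :=
  List.zipWithAll (fun x y => x.getD 0 + y.getD 0) a b

/-- The sequence `(σ_1, …, σ_n)` (with values in `{1,…,n}`) of a permutation of `Fin n`. -/
def seqOfPerm {n : ℕ} (π : Equiv.Perm (Fin n)) : List ℕ :=
  List.ofFn (fun i => (π i : ℕ) + 1)

/-- The cycle type of a permutation, including fixed points as parts equal to `1`. -/
def fullCycleType {n : ℕ} (π : Equiv.Perm (Fin n)) : Multiset ℕ :=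
  π.cycleType + Multiset.replicate (n - π.support.card) 1

/-- `L(n) = (n, n−1, …, ⌈n/2⌉+1, ⌈n/2⌉−1, …, 2, 1)`:
the integers `n,…,1` in decreasing order with `⌈n/2⌉` omitted. -/
def Lseq (n : ℕ) : List ℕ :=
  ((List.range' 1 n).reverse).filter (fun x => decide (x ≠ (n + 1) / 2))

/-- `w = ⌊n/2⌋ + 2p`, where `p = 1` if `n` is odd and `p = 0` if `n` is even. -/
def wval (n : ℕ) : ℕ := n / 2 + (if n % 2 = 1 then 2 else 0)

/-- `L'(n)`: the integers `n,…,1` in decreasing order with `w` omitted. -/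
def L'seq (n : ℕ) : List ℕ :=
  ((List.range' 1 n).reverse).filter (fun x => decide (x ≠ wval n))

/-- `A(σ,k)`: replace the entry `n` of `σ` by `n + ⌈k/2⌉` and append `I^n(L(k)) ⊕ (n)`. -/
def Aseq (n k : ℕ) (σ : List ℕ) : List ℕ :=
  σ.map (fun x => if x = n then n + (k + 1) / 2 else x) ++ (Lseq k).map (· + n) ++ [n]

/-! ### Row insertion -/

theorem rsInsert_append {r : List ℕ} {x : ℕ} (T : List (List ℕ)) (h : ∀ b ∈ r, b ≤ x) :
    rsInsert (r :: T) x = (r ++ [x]) :: T := by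
  have : r.findIdx? (fun b => decide (x < b)) = none := by
    simpa [List.findIdx?_eq_none_iff] using h
  simp [rsInsert, this]

theorem rsInsert_bump {r₁ : List ℕ} {x b : ℕ} (r₂ : List ℕ) (T : List (List ℕ))
    (h : ∀ a ∈ r₁, a ≤ x) (hb : x < b) :
    rsInsert ((r₁ ++ b :: r₂) :: T) x = (r₁ ++ x :: r₂) :: rsInsert T b := by
  have h0 : r₁.findIdx? (fun b => decide (x < b)) = none := by
    simpa [List.findIdx?_eq_none_iff] using h
  have : (r₁ ++ b :: r₂).findIdx? (fun b => decide (x < b)) = some r₁.length := by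
    simp [List.findIdx?_append, h0, List.findIdx?_cons, hb]
  simp [rsInsert, this]

/-- Either `x` can be appended to the row `r`, or `r` splits at the entry that `x` bumps. -/
theorem row_cases (r : List ℕ) (x : ℕ) :
    (∀ b ∈ r, b ≤ x) ∨
      ∃ r₁ b r₂, r = r₁ ++ b :: r₂ ∧ (∀ a ∈ r₁, a ≤ x) ∧ x < b := by
  induction r with
  | nil => simp
  | cons a r ih =>
    by_cases ha : a ≤ x
    · rcases ih with h | ⟨r₁, b, r₂, rfl, h, hb⟩
      · left; simp [ha]; exact h
      · right; exact ⟨a :: r₁, b, r₂, rfl, by simp [ha]; exact h, hb⟩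
    · right; exact ⟨[], a, r, rfl, by simp, by omega⟩

theorem rsInsert_map {g : ℕ → ℕ} (hg : StrictMono g) (T : List (List ℕ)) (x : ℕ) :
    rsInsert (T.map (List.map g)) (g x) = (rsInsert T x).map (List.map g) := by
  induction T generalizing x with
  | nil => simp [rsInsert]
  | cons r T ih =>
    rcases row_cases r x with h | ⟨r₁, b, r₂, rfl, h, hb⟩
    · rw [rsInsert_append _ h, List.map_cons, rsInsert_append]
      · simp
      · simpa [hg.le_iff_le] using h
    · rw [rsInsert_bump _ _ h hb, List.map_cons, List.map_append, List.map_cons, rsInsert_bump, ih]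
      · simp
      · simpa [hg.le_iff_le] using h
      · exact hg hb

theorem foldl_rsInsert_map {g : ℕ → ℕ} (hg : StrictMono g) (σ : List ℕ) (T : List (List ℕ)) :
    (σ.map g).foldl rsInsert (T.map (List.map g)) =
      (σ.foldl rsInsert T).map (List.map g) := by
  induction σ generalizing T with
  | nil => rfl
  | cons x σ ih => simp [rsInsert_map hg, ih]

theorem rskShape_map {g : ℕ → ℕ} (hg : StrictMono g) (σ : List ℕ) :
    rskShape (σ.map g) = rskShape σ := by
  have := foldl_rsInsert_map hg σ []
  simp only [List.map_nil] at this
  simp [rskShape, rsTableau, this]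

/-! ### Tableaux with one large entry -/

/-- All entries of `T` are smaller than `N`. -/
def AllSmall (N : ℕ) (T : List (List ℕ)) : Prop := ∀ r ∈ T, ∀ b ∈ r, b < N

/-- All entries of the tableau are smaller than `N`, except for a single entry `M`, which is the
last entry of its row. -/
def OneMax (N M : ℕ) : List (List ℕ) → Prop
  | [] => False
  | r :: T => ((∀ b ∈ r, b < N) ∧ OneMax N M T) ∨
      ∃ r₀, r = r₀ ++ [M] ∧ (∀ b ∈ r₀, b < N) ∧ AllSmall N T

theorem row_set_lt {N x b : ℕ} {r₁ r₂ : List ℕ} (hx : x < N) (hr : ∀ a ∈ r₁ ++ b :: r₂, a < N) :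
    ∀ a ∈ r₁ ++ x :: r₂, a < N := by
  intro a ha
  rcases List.mem_append.1 ha with h | h
  · exact hr a (by simp [h])
  · rcases List.mem_cons.1 h with rfl | h
    · exact hx
    · exact hr a (by simp [h])

theorem allSmall_insert {N x : ℕ} (hx : x < N) {T : List (List ℕ)} (hT : AllSmall N T) :
    AllSmall N (rsInsert T x) := by
  induction T generalizing x with
  | nil => simpa [AllSmall, rsInsert] using hx
  | cons r T ih =>
    simp only [AllSmall, List.forall_mem_cons] at hT
    rcases row_cases r x with h | ⟨r₁, b, r₂, rfl, h, hb⟩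
    · rw [rsInsert_append _ h]
      simp only [AllSmall, List.forall_mem_cons]
      refine ⟨?_, hT.2⟩
      grind
    · rw [rsInsert_bump _ _ h hb]
      have h2 := ih (x := b) (hT.1 b (by simp)) hT.2
      simp only [AllSmall, List.forall_mem_cons]
      exact ⟨row_set_lt hx hT.1, h2⟩

theorem oneMax_insert_max {N M : ℕ} (hM : N ≤ M) {T : List (List ℕ)} (hT : AllSmall N T) :
    OneMax N M (rsInsert T M) := by
  cases T with
  | nil => exact Or.inr ⟨[], by simp, by simp, by simp [AllSmall]⟩
  | cons r T =>
    simp only [AllSmall, List.forall_mem_cons] at hT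
    rw [rsInsert_append _ (fun b hb => by have := hT.1 b hb; omega)]
    exact Or.inr ⟨r, rfl, hT.1, hT.2⟩

theorem oneMax_insert {N M x : ℕ} (hM : N ≤ M) (hx : x < N) {T : List (List ℕ)}
    (hT : OneMax N M T) : OneMax N M (rsInsert T x) := by
  induction T generalizing x with
  | nil => exact hT.elim
  | cons r T ih =>
    rcases hT with ⟨hr, hT⟩ | ⟨r₀, rfl, hr, hT⟩
    · rcases row_cases r x with h | ⟨r₁, b, r₂, rfl, h, hb⟩
      · rw [rsInsert_append _ h]
        exact Or.inl ⟨by grind, hT⟩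
      · rw [rsInsert_bump _ _ h hb]
        exact Or.inl ⟨row_set_lt hx hr, ih (hr b (by simp)) hT⟩
    · rcases row_cases r₀ x with h | ⟨r₁, b, r₂, rfl, h, hb⟩
      · rw [rsInsert_bump _ _ h (by omega)]
        exact Or.inl ⟨by grind, oneMax_insert_max hM hT⟩
      · rw [List.append_assoc, List.cons_append, rsInsert_bump _ _ h hb]
        exact Or.inr ⟨r₁ ++ x :: r₂, by simp, row_set_lt hx hr, allSmall_insert (hr b (by simp)) hT⟩

theorem oneMax_tableau {N M : ℕ} (hM : N ≤ M) {a b : List ℕ} (ha : ∀ x ∈ a, x < N)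
    (hb : ∀ x ∈ b, x < N) : OneMax N M (rsTableau (a ++ M :: b)) := by
  have h1 : ∀ (a : List ℕ) (T : List (List ℕ)), (∀ x ∈ a, x < N) → AllSmall N T →
      AllSmall N (a.foldl rsInsert T) := by
    intro a
    induction a with
    | nil => exact fun T _ h => h
    | cons x a ih =>
      intro T hx hT
      rw [List.forall_mem_cons] at hx
      exact ih _ hx.2 (allSmall_insert hx.1 hT)
  have h2 : ∀ (a : List ℕ) (T : List (List ℕ)), (∀ x ∈ a, x < N) → OneMax N M T →
      OneMax N M (a.foldl rsInsert T) := by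
    intro a
    induction a with
    | nil => exact fun T _ h => h
    | cons x a ih =>
      intro T hx hT
      rw [List.forall_mem_cons] at hx
      exact ih _ hx.2 (oneMax_insert hM hx.1 hT)
  rw [rsTableau, List.foldl_append, List.foldl_cons]
  exact h2 _ _ hb (oneMax_insert_max hM (h1 _ _ ha (by simp [AllSmall])))

/-! ### Inserting a decreasing word -/

/-- Once a letter `y` of a decreasing word sits to the right of smaller entries `r₀`, the rest of
the word replaces it in place, so that all letters but the last reach the rows below. -/
theorem foldl_row (r₀ s : List ℕ) (y : ℕ) (d : List ℕ) (T : List (List ℕ))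
    (hd : (y :: d).Pairwise (· > ·)) (hr : ∀ b ∈ r₀, ∀ z ∈ d, b < z) :
    ∃ z, d.foldl rsInsert ((r₀ ++ y :: s) :: T) =
      (r₀ ++ z :: s) :: (y :: d).dropLast.foldl rsInsert T := by
  induction d generalizing y T with
  | nil => exact ⟨y, by simp⟩
  | cons z d ih =>
    rw [List.pairwise_cons] at hd
    rw [List.foldl_cons, rsInsert_bump _ _ (fun b hb => (hr b hb z (by simp)).le)
      (hd.1 z (by simp))]
    obtain ⟨w, hw⟩ := ih z (rsInsert T y) hd.2 (fun b hb a ha => hr b hb a (by simp [ha]))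
    exact ⟨w, by rw [hw]; simp⟩

theorem shapeAdd_cons (a : ℕ) (l : List ℕ) (m : ℕ) :
    shapeAdd (a :: l) (List.replicate (m + 1) 1) =
      (a + 1) :: shapeAdd l (List.replicate m 1) := by
  simp [shapeAdd, List.replicate_succ]

theorem shapeAdd_nil (m : ℕ) :
    shapeAdd [] (List.replicate (m + 1) 1) = 1 :: shapeAdd [] (List.replicate m 1) := by
  simp [shapeAdd, List.replicate_succ]

theorem shapeAdd_zero (l : List ℕ) : shapeAdd l (List.replicate 0 1) = l := by
  cases l <;> simp [shapeAdd]

theorem pairwise_dropLast {d : List ℕ} (h : d.Pairwise (· > ·)) :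
    d.dropLast.Pairwise (· > ·) := h.sublist d.dropLast_sublist

theorem shape_small (N m : ℕ) (T : List (List ℕ)) (d : List ℕ) (hm : d.length = m)
    (hT : AllSmall N T) (hd : d.Pairwise (· > ·)) (hN : ∀ z ∈ d, N ≤ z) :
    (d.foldl rsInsert T).map List.length =
      shapeAdd (T.map List.length) (List.replicate m 1) := by
  induction m generalizing T d with
  | zero =>
    obtain rfl := List.length_eq_zero_iff.1 hm
    rw [shapeAdd_zero]; rfl
  | succ m ih =>
    obtain ⟨x, d, rfl⟩ := List.exists_cons_of_length_eq_add_one hm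
    have hl : (x :: d).dropLast.length = m := by simpa using hm
    have hN' : ∀ z ∈ (x :: d).dropLast, N ≤ z := fun z hz => hN z (List.dropLast_subset _ hz)
    rw [List.forall_mem_cons] at hN
    cases T with
    | nil =>
      obtain ⟨z, hz⟩ := foldl_row [] [] x d [] hd (by simp)
      rw [List.foldl_cons, rsInsert]
      simp only [List.nil_append] at hz
      rw [hz, List.map_cons, ih [] _ hl hT (pairwise_dropLast hd) hN', List.map_nil, shapeAdd_nil]
      rfl
    | cons r T =>
      simp only [AllSmall, List.forall_mem_cons] at hT
      rw [List.foldl_cons, rsInsert_append _ (fun b hb => ((hT.1 b hb).trans_le hN.1).le)]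
      obtain ⟨z, hz⟩ := foldl_row r [] x d T hd
        (fun b hb z hz => (hT.1 b hb).trans_le (hN.2 z hz))
      rw [hz, List.map_cons, ih T _ hl hT.2 (pairwise_dropLast hd) hN', List.map_cons,
        shapeAdd_cons]
      simp

/-- The effect of a decreasing word on the row that contains `M`, once its first letter `x > M`
has been appended to it: the bumped word `e` is `x :: d` without its last letter, where the
smallest letter larger than `M` is replaced by `M` if `d` has letters smaller than `M`. In both
cases `e` is decreasing. -/
theorem foldl_row_max (N M : ℕ) (hM : N ≤ M) (r₀ : List ℕ) (hr : ∀ b ∈ r₀, b < N)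
    (x : ℕ) (d : List ℕ) (T : List (List ℕ)) (hx : M < x)
    (hd : (x :: d).Pairwise (· > ·)) (hN : ∀ z ∈ d, N ≤ z) (hMd : M ∉ d) :
    ∃ (y z : ℕ) (e : List ℕ), d.foldl rsInsert ((r₀ ++ [M, x]) :: T) = (r₀ ++ [y, z]) :: e.foldl rsInsert T ∧
      e.length = d.length ∧ e.Pairwise (· > ·) ∧ (∀ z ∈ e, N ≤ z ∧ z ≤ x) := by
  induction d generalizing x T with
  | nil => exact ⟨M, x, [], by simp⟩
  | cons w d ih =>
    rw [List.pairwise_cons] at hd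
    obtain ⟨hxd, hd⟩ := hd
    rw [List.forall_mem_cons] at hN
    have hwx : w < x := hxd w (by simp)
    have hwM : M ≠ w := by rintro rfl; simp at hMd
    have hMd' : M ∉ d := fun h => hMd (by simp [h])
    rcases lt_or_gt_of_ne hwM with h | h
    · obtain ⟨y, z, e, h1, h2, h3, h4⟩ := ih w (rsInsert T x) h hd hN.2 hMd'
      have hb : rsInsert ((r₀ ++ [M, x]) :: T) w = (r₀ ++ [M, w]) :: rsInsert T x := by
        have := rsInsert_bump (r₁ := r₀ ++ [M]) (x := w) (b := x) [] T
          (by intro a ha; simp at ha; rcases ha with ha | rfl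
              · have := hr a ha; omega
              · exact h.le) hwx
        simpa using this
      refine ⟨y, z, x :: e, ?_, by simp [h2], ?_, ?_⟩
      · rw [List.foldl_cons, hb, h1, List.foldl_cons]
      · rw [List.pairwise_cons]
        exact ⟨fun a ha => (h4 a ha).2.trans_lt hwx, h3⟩
      · intro a ha
        rcases List.mem_cons.1 ha with rfl | ha
        · omega
        · have := h4 a ha; omega
    ·
      -- From here on the letters `w, …` are smaller than `M`, and `w` bumps `M`.
      obtain ⟨z, hz⟩ := foldl_row r₀ [x] w d (rsInsert T M) hd
        (fun b hb z hz => (hr b hb).trans_le (hN.2 z hz))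
      rw [List.foldl_cons, rsInsert_bump _ _ (fun b hb => ((hr b hb).trans_le hN.1).le) h, hz]
      have hw : ∀ a ∈ (w :: d).dropLast, N ≤ a ∧ a ≤ w := by
        intro a ha
        rcases List.mem_cons.1 (List.dropLast_subset _ ha) with rfl | ha
        · exact ⟨hN.1, le_rfl⟩
        · exact ⟨hN.2 a ha, ((List.pairwise_cons.1 hd).1 a ha).le⟩
      refine ⟨z, x, M :: (w :: d).dropLast, rfl, by simp, ?_, ?_⟩
      · rw [List.pairwise_cons]
        exact ⟨fun a ha => (hw a ha).2.trans_lt h, pairwise_dropLast hd⟩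
      · intro a ha
        rcases List.mem_cons.1 ha with rfl | ha
        · omega
        · have := hw a ha; omega

theorem shape_oneMax (N M m : ℕ) (hM : N ≤ M) (T : List (List ℕ)) (d : List ℕ)
    (hm : d.length = m) (hT : OneMax N M T) (hd : d.Pairwise (· > ·)) (hN : ∀ z ∈ d, N ≤ z)
    (hMd : M ∉ d) (hh : ∀ z ∈ d.head?, M < z) :
    (d.foldl rsInsert T).map List.length =
      shapeAdd (T.map List.length) (List.replicate m 1) := by
  induction m generalizing T d with
  | zero =>
    obtain rfl := List.length_eq_zero_iff.1 hm
    rw [shapeAdd_zero]; rfl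
  | succ m ih =>
    obtain ⟨x, d, rfl⟩ := List.exists_cons_of_length_eq_add_one hm
    have hl : (x :: d).dropLast.length = m := by simpa using hm
    have hN' : ∀ z ∈ (x :: d).dropLast, N ≤ z := fun z hz => hN z (List.dropLast_subset _ hz)
    rw [List.forall_mem_cons] at hN
    have hx : M < x := hh x (by simp)
    cases T with
    | nil => exact hT.elim
    | cons r T =>
      rcases hT with ⟨hr, hT⟩ | ⟨r₀, rfl, hr, hT⟩
      · rw [List.foldl_cons, rsInsert_append _ (fun b hb => ((hr b hb).trans_le hN.1).le)]
        obtain ⟨z, hz⟩ := foldl_row r [] x d T hd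
          (fun b hb z hz => (hr b hb).trans_le (hN.2 z hz))
        rw [hz, List.map_cons, ih T _ hl hT (pairwise_dropLast hd) hN'
          (fun h => hMd (List.dropLast_subset _ h)) ?_, List.map_cons, shapeAdd_cons]
        · simp
        · cases d <;> simp [hx]
      · rw [List.foldl_cons, rsInsert_append _ (by
          intro a ha
          rcases List.mem_append.1 ha with ha | ha
          · have := hr a ha; omega
          · simp at ha; omega)]
        obtain ⟨y, z, e, h1, h2, h3, h4⟩ := foldl_row_max N M hM r₀ hr x d T hx hd hN.2
          (fun h => hMd (by simp [h]))
        rw [List.append_assoc, List.singleton_append, h1, List.map_cons,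
          shape_small N m T e (by simpa [h2] using hm) hT h3 (fun z hz => (h4 z hz).1),
          List.map_cons, shapeAdd_cons]
        simp

/-! ### The appended word -/

theorem Lseq_eq {k : ℕ} (hk : 1 < k) :
    Lseq k = (List.range' ((k + 1) / 2 + 1) (k / 2)).reverse ++
      (List.range' 1 ((k + 1) / 2 - 1)).reverse := by
  have h : List.range' 1 k = List.range' 1 ((k + 1) / 2 - 1) ++
      ((k + 1) / 2) :: List.range' ((k + 1) / 2 + 1) (k / 2) := by
    rw [← List.range'_succ]
    have := List.range'_append (s := 1) (m := (k + 1) / 2 - 1) (n := k / 2 + 1) (step := 1)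
    rw [show 1 + 1 * ((k + 1) / 2 - 1) = (k + 1) / 2 by omega,
      show (k + 1) / 2 - 1 + (k / 2 + 1) = k by omega] at this
    exact this.symm
  rw [Lseq, h, List.reverse_append, List.reverse_cons, List.filter_append, List.filter_append]
  congr 1
  · rw [List.filter_eq_self.2]
    · simp
    · intro a ha
      simp at ha ⊢
      omega
  · rw [List.filter_eq_self]
    intro a ha
    simp at ha ⊢
    omega

theorem Lseq_length {k : ℕ} (hk : 1 < k) : (Lseq k).length = k - 1 := by
  rw [Lseq_eq hk]; simp; omega

theorem Lseq_getElem {k : ℕ} (hk : 1 < k) (j : ℕ) (hj : j < (Lseq k).length) :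
    (Lseq k)[j] = if j < k / 2 then k - j else k - 1 - j := by
  have hl := Lseq_length hk
  simp only [Lseq_eq hk]
  rw [List.getElem_append]
  split_ifs with h1 h2 h2 <;> simp at h1 ⊢ <;> omega

theorem tail_pairwise {n k : ℕ} :
    ((Lseq k).map (· + n) ++ [n]).Pairwise (· > ·) := by
  rw [List.pairwise_append]
  refine ⟨?_, by simp, ?_⟩
  · rw [List.pairwise_map]
    have h : (Lseq k).Pairwise (· > ·) := by
      refine List.Pairwise.filter _ ?_
      rw [List.pairwise_reverse]
      exact List.pairwise_lt_range'
    exact h.imp (by intro a b h; simpa using h)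
  · intro a ha b hb
    simp [Lseq] at ha hb
    omega

/-- The shape half, for a word `a ++ n :: b` with `a` and `b` consisting of letters `< n`. -/
theorem shape_Aseq {n k : ℕ} (hk : 1 < k) {a b : List ℕ} (ha : ∀ x ∈ a, x < n)
    (hb : ∀ x ∈ b, x < n) :
    rskShape (Aseq n k (a ++ n :: b)) =
      shapeAdd (rskShape (a ++ n :: b)) (List.replicate k 1) := by
  set c := (k + 1) / 2 with hc
  let g : ℕ → ℕ := fun x => if x < n then x else x + c
  have hg : StrictMono g := by
    intro x y h
    simp only [g]
    split_ifs <;> omega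
  have hs : ∀ a : List ℕ, (∀ x ∈ a, x < n) →
      a.map (fun x => if x = n then n + c else x) = a ∧ a.map g = a := by
    intro a ha
    constructor
    · conv_rhs => rw [← List.map_id a]
      exact List.map_congr_left (fun x hx => by have := ha x hx; simp; omega)
    · conv_rhs => rw [← List.map_id a]
      exact List.map_congr_left (fun x hx => by simp [g, ha x hx])
  have hA : Aseq n k (a ++ n :: b) = (a ++ (n + c) :: b) ++ ((Lseq k).map (· + n) ++ [n]) := by
    rw [Aseq, List.append_assoc, List.map_append, List.map_cons, ← hc, (hs a ha).1, (hs b hb).1]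
    simp
  have hS : rskShape (a ++ n :: b) = rskShape (a ++ (n + c) :: b) := by
    rw [← rskShape_map hg, List.map_append, List.map_cons, (hs a ha).2, (hs b hb).2]
    simp [g]
  rw [hS, hA, rskShape, rskShape, rsTableau, List.foldl_append]
  refine shape_oneMax n (n + c) k (by omega) _ _ ?_ (oneMax_tableau (by omega) ha hb)
    tail_pairwise ?_ ?_ ?_
  · simp [Lseq_length hk]; omega
  · intro z hz
    simp at hz
    omega
  · intro h
    simp [Lseq] at h
    omega
  · have h0 := Lseq_getElem hk 0 (by rw [Lseq_length hk]; omega)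
    rw [if_pos (by omega)] at h0
    obtain ⟨y, l, hl⟩ := List.exists_cons_of_length_eq_add_one
      (show (Lseq k).length = (k - 2) + 1 by rw [Lseq_length hk]; omega)
    simp only [hl, List.getElem_cons_zero] at h0
    simp [hl, h0]
    omega

/-! ### Cyclicity -/

theorem fullCycleType_eq {n : ℕ} (hn : 1 < n) (π : Equiv.Perm (Fin n))
    (h : ∀ x y, π.SameCycle x y) : fullCycleType π = {n} := by
  have hne : ∀ x, π x ≠ x := by
    intro x hx
    have : Nontrivial (Fin n) := Fin.nontrivial_iff_two_le.2 hn
    obtain ⟨y, hy⟩ := exists_ne x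
    exact hy ((h x y).eq_of_left hx).symm
  have hc : π.IsCycle := ⟨⟨0, by omega⟩, hne _, fun y _ => h _ y⟩
  have hs : π.support = Finset.univ := by ext; simp [hne]
  rw [fullCycleType, hc.cycleType, hs]
  simp

theorem sameCycle_of_fullCycleType {n : ℕ} (π : Equiv.Perm (Fin n))
    (h : fullCycleType π = {n}) : 0 < n ∧ ∀ x y, π.SameCycle x y := by
  have hn : 0 < n := by
    rcases Nat.eq_zero_or_pos n with rfl | h0
    · have := congrArg Multiset.card h
      rw [Subsingleton.elim π 1] at this
      simp [fullCycleType] at this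
    · exact h0
  refine ⟨hn, ?_⟩
  have hcard := congrArg Multiset.card h
  simp only [fullCycleType, Multiset.card_add, Multiset.card_replicate,
    Multiset.card_singleton] at hcard
  have hle := Finset.card_le_univ π.support
  rw [Fintype.card_fin] at hle
  rcases Nat.eq_zero_or_pos (Multiset.card π.cycleType) with h0 | h0
  · have : π = 1 := by simpa using h0
    subst this
    simp at hcard
    subst hcard
    intro x y
    rw [Subsingleton.elim x y]
  · have hc : π.IsCycle := Equiv.Perm.card_cycleType_eq_one.1 (by omega)
    have hs : π.support = Finset.univ := by
      rw [← Finset.card_eq_iff_eq_univ, Fintype.card_fin]; omega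
    have hne : ∀ x, π x ≠ x := fun x => by
      rw [← Equiv.Perm.mem_support, hs]; simp
    exact fun x y => hc.sameCycle (hne x) (hne y)

/-- The one-line notation of `A(σ,k)`, with positions and values shifted down to start at `0`. -/
def aFun {n : ℕ} (k : ℕ) (π : Equiv.Perm (Fin n)) (i : ℕ) : ℕ :=
  if h : i < n then
    if (π ⟨i, h⟩ : ℕ) + 1 = n then n + (k + 1) / 2 - 1 else π ⟨i, h⟩
  else if i + 1 = n + k then n - 1
  else if i - n < k / 2 then n + (k - (i - n)) - 1
  else n + (k - 1 - (i - n)) - 1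

theorem aFun_lt {n k : ℕ} (hn : 0 < n) (hk : 1 < k) (π : Equiv.Perm (Fin n)) (i : ℕ)
    (hi : i < n + k) : aFun k π i < n + k := by
  unfold aFun
  split_ifs with h
  · omega
  · have := (π ⟨i, h⟩).2
    omega
  all_goals omega

theorem aFun_inj {n k : ℕ} (hn : 0 < n) (hk : 1 < k) (π : Equiv.Perm (Fin n)) (i j : ℕ)
    (hi : i < n + k) (hj : j < n + k) (h : aFun k π i = aFun k π j) : i = j := by
  by_cases h1 : i < n <;> by_cases h2 : j < n
  · have := π.injective.eq_iff (a := ⟨i, h1⟩) (b := ⟨j, h2⟩)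
    rw [Fin.ext_iff, Fin.ext_iff] at this
    have l1 := (π ⟨i, h1⟩).2
    have l2 := (π ⟨j, h2⟩).2
    simp only [aFun, h1, h2, dite_true] at h
    apply this.1
    split_ifs at h <;> omega
  · have l1 := (π ⟨i, h1⟩).2
    simp only [aFun, h1, h2, dite_true, dite_false] at h
    split_ifs at h <;> omega
  · have l2 := (π ⟨j, h2⟩).2
    simp only [aFun, h1, h2, dite_true, dite_false] at h
    split_ifs at h <;> omega
  · simp only [aFun, h1, h2, dite_false] at h
    split_ifs at h <;> omega

/-- `A(σ,k)` as a permutation of `Fin (n + k)`. -/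
noncomputable def aPerm {n k : ℕ} (hn : 0 < n) (hk : 1 < k) (π : Equiv.Perm (Fin n)) :
    Equiv.Perm (Fin (n + k)) :=
  Equiv.ofBijective (fun i => ⟨aFun k π i, aFun_lt hn hk π i i.2⟩)
    (Finite.injective_iff_bijective.1 (fun i j h =>
      Fin.ext (aFun_inj hn hk π i j i.2 j.2 (Fin.ext_iff.1 h))))

theorem aPerm_val {n k : ℕ} (hn : 0 < n) (hk : 1 < k) (π : Equiv.Perm (Fin n))
    (i : Fin (n + k)) : (aPerm hn hk π i : ℕ) = aFun k π i := rfl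

theorem seqOfPerm_aPerm {n k : ℕ} (hn : 0 < n) (hk : 1 < k) (π : Equiv.Perm (Fin n)) :
    seqOfPerm (aPerm hn hk π) = Aseq n k (seqOfPerm π) := by
  have hl := Lseq_length hk
  apply List.ext_getElem
  · simp [seqOfPerm, Aseq, hl]; omega
  · intro i h1 h2
    simp [seqOfPerm] at h1
    simp only [seqOfPerm, List.getElem_ofFn, aPerm_val, Aseq, List.getElem_append,
      List.length_append, List.length_map, List.length_ofFn, List.getElem_map, hl,
      Lseq_getElem hk, aFun, List.getElem_singleton]
    split_ifs <;> omega

/-- Along the zigzag, each new point is at distance `2 j + 1` (for `j < k / 2`) or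
`2 (k - 1 - j)` (otherwise) from the last point. -/
theorem aPerm_sameCycle_last {n k : ℕ} (hn : 0 < n) (hk : 1 < k) (π : Equiv.Perm (Fin n))
    (m : ℕ) : ∀ j (hj : j < k), (if j < k / 2 then 2 * j + 1 else 2 * (k - 1 - j)) = m →
      (aPerm hn hk π).SameCycle ⟨n + j, by omega⟩ ⟨n + (k - 1), by omega⟩ := by
  induction m using Nat.strong_induction_on with
  | _ m ih =>
    intro j hj hm
    by_cases hjk : j = k - 1
    · subst hjk; exact Equiv.Perm.SameCycle.refl _ _
    · have key : ∀ j' (hj' : j' < k), aFun k π (n + j) = n + j' →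
          (if j' < k / 2 then 2 * j' + 1 else 2 * (k - 1 - j')) < m →
          (aPerm hn hk π).SameCycle ⟨n + j, by omega⟩ ⟨n + (k - 1), by omega⟩ := by
        intro j' hj' h1 h2
        rw [← Equiv.Perm.sameCycle_apply_left]
        have : aPerm hn hk π ⟨n + j, by omega⟩ = ⟨n + j', by omega⟩ := Fin.ext h1
        rw [this]
        exact ih _ h2 j' hj' rfl
      by_cases hlow : j < k / 2
      · rw [if_pos hlow] at hm
        refine key (k - 1 - j) (by omega) ?_ ?_
        · unfold aFun; split_ifs <;> omega
        · split_ifs <;> omega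
      · rw [if_neg hlow] at hm
        refine key (k - 2 - j) (by omega) ?_ ?_
        · unfold aFun; split_ifs <;> omega
        · split_ifs <;> omega

theorem aPerm_sameCycle {n k : ℕ} (hn : 0 < n) (hk : 1 < k) (π : Equiv.Perm (Fin n))
    (h : ∀ x y, π.SameCycle x y) : ∀ x y, (aPerm hn hk π).SameCycle x y := by
  set f := aPerm hn hk π with hf
  have hlast : ∀ j (hj : j < k),
      f.SameCycle ⟨n + j, by omega⟩ ⟨n - 1, by omega⟩ := by
    intro j hj
    refine (aPerm_sameCycle_last hn hk π _ j hj rfl).trans ?_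
    rw [← Equiv.Perm.sameCycle_apply_left]
    have : f ⟨n + (k - 1), by omega⟩ = ⟨n - 1, by omega⟩ := by
      apply Fin.ext
      rw [hf, aPerm_val]
      simp only [aFun]
      split_ifs <;> omega
    rw [← hf, this]
  -- Each step of `π` stays inside one orbit of `f`.
  have hstep : ∀ x : Fin n, f.SameCycle (Fin.castAdd k x) (Fin.castAdd k (π x)) := by
    intro x
    rw [← Equiv.Perm.sameCycle_apply_left]
    have hv : (f (Fin.castAdd k x) : ℕ) = aFun k π x := rfl
    simp only [aFun, x.2, dite_true] at hv
    split_ifs at hv with hx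
    · have h1 : f (Fin.castAdd k x) = ⟨n + ((k + 1) / 2 - 1), by omega⟩ :=
        Fin.ext (by rw [hv]; simp; omega)
      have hx' : (π x : ℕ) + 1 = n := hx
      have h2 : Fin.castAdd k (π x) = ⟨n - 1, by omega⟩ := Fin.ext (by simp; omega)
      rw [h1, h2]
      exact hlast _ (by omega)
    · have h1 : f (Fin.castAdd k x) = Fin.castAdd k (π x) := Fin.ext hv
      rw [h1]
  have hpow : ∀ (m : ℕ) (x : Fin n), f.SameCycle (Fin.castAdd k x) (Fin.castAdd k ((π ^ m) x)) := by
    intro m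
    induction m with
    | zero => intro x; exact Equiv.Perm.SameCycle.refl _ _
    | succ m ih =>
      intro x
      rw [pow_succ', Equiv.Perm.mul_apply]
      exact (ih x).trans (hstep _)
  have hall : ∀ x, f.SameCycle x ⟨n - 1, by omega⟩ := by
    intro x
    by_cases hx : (x : ℕ) < n
    · obtain ⟨m, hm⟩ := (h ⟨x, hx⟩ ⟨n - 1, by omega⟩).exists_nat_pow_eq
      have := hpow m ⟨x, hx⟩
      rw [hm] at this
      exact this
    · have := hlast (x - n) (by omega)
      have e : (⟨n + (x - n), by omega⟩ : Fin (n + k)) = x := Fin.ext (by simp; omega)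
      rwa [e] at this
  exact fun x y => (hall x).trans (hall y).symm

/-- for a cyclic permutation `σ` of `{1,…,n}` and `k > 1`, `A(σ,k)` is a
cyclic permutation of `{1,…,n+k}` and `Γ(P(A(σ,k))) = Γ(P(σ)) + (1^k)`. -/
theorem stmt_8 (n k : ℕ) (hk : 1 < k) (π : Equiv.Perm (Fin n))
    (hcyc : fullCycleType π = {n}) :
    (∃ π' : Equiv.Perm (Fin (n + k)), seqOfPerm π' = Aseq n k (seqOfPerm π) ∧
       fullCycleType π' = {n + k}) ∧
    rskShape (Aseq n k (seqOfPerm π)) =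
      shapeAdd (rskShape (seqOfPerm π)) (List.replicate k 1) := by
  obtain ⟨hn, hsame⟩ := sameCycle_of_fullCycleType π hcyc
  refine ⟨⟨aPerm hn hk π, seqOfPerm_aPerm hn hk π,
    fullCycleType_eq (by omega) _ (aPerm_sameCycle hn hk π hsame)⟩, ?_⟩
  have hmem : n ∈ seqOfPerm π := by
    rw [seqOfPerm, List.mem_ofFn]
    exact ⟨π.symm ⟨n - 1, by omega⟩, by simp; omega⟩
  have hnd : (seqOfPerm π).Nodup := by
    rw [seqOfPerm, List.nodup_ofFn]
    intro i j h
    exact π.injective (Fin.ext (by simpa using h))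
  have hle : ∀ x ∈ seqOfPerm π, x ≤ n := by
    intro x hx
    rw [seqOfPerm, List.mem_ofFn] at hx
    obtain ⟨i, rfl⟩ := hx
    exact (π i).2
  obtain ⟨a, b, hab⟩ := List.append_of_mem hmem
  rw [hab] at hnd hle ⊢
  rw [List.nodup_append, List.nodup_cons] at hnd
  refine shape_Aseq hk (fun x hx => ?_) (fun x hx => ?_)
  · have h1 := hle x (by simp [hx])
    have h2 : x ≠ n := hnd.2.2 x hx n (by simp)
    omega
  · have h1 := hle x (by simp [hx])
    have h2 : x ≠ n := by rintro rfl; exact hnd.2.1.1 hx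
    omega
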